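/- Suppose G = H[G_v : v ∈ V(H)] is an inflation of a graph H on at least two vertices by nonempty graphs G_v. Then either there is a vertex x of H with lcw(G_x) = lcw(G), or there are distinct vertices x and y of H with lcw(G_x) ≥ lcw(G) − lcw(H) − 1 and lcw(G_y) ≥ lcw(G) − lcw(H) − 1. -/

import Mathlib

/-!
Suppose no two distinct modules have linear clique-width at least `lcw G - lcw H - 1`, and let
`x` maximise `lcw G_x`. Then every other module is built with `q = lcw G - lcw H - 2` labels.
An expression for `G` is obtained by building `G_x` first, collapsing it to one reserved label, and
then following an optimal expression for `H`: whenever a vertex `w ≠ x` is introduced, `G_w` is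
built with `q` auxiliary labels which are then merged into the label of `w`; when `x` is introduced,
the reserved label is renamed (`Bld.inflate`). This uses
`max (lcw G_x) (lcw H + 1 + q) = max (lcw G_x) (lcw G - 1)` labels (`lcwLE_inflation`), which
forces `lcw G_x ≥ lcw G`; the reverse inequality holds for all induced subgraphs (`lcw_induce_le`).

Expressions are handled through the inductive predicate `Bld`, which allows an arbitrary label type
and ignores the labels of vertices not yet introduced.
-/

open scoped Classical

/-! ### Linear clique-width -/

/-- A configuration reached while building a graph by a linear clique-width expression:
the set of vertices introduced so far, the adjacency relation created so far, and the
current labeling of the vertices by labels from `Fin k`. -/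
structure LCWConfig (V : Type) (k : ℕ) where
  verts : Set V
  adj : V → V → Prop
  lab : V → Fin k

/-- A single operation of a linear clique-width expression with `k` labels:
introduce a new vertex with some label, join all vertices labeled `i` to all vertices
labeled `j` (for `i ≠ j`), or relabel every vertex labeled `i` to `j` (for `i ≠ j`). -/
inductive LCWStep {V : Type} {k : ℕ} : LCWConfig V k → LCWConfig V k → Prop
  | intro (C : LCWConfig V k) (v : V) (hv : v ∉ C.verts) (c : Fin k) :
      LCWStep C ⟨insert v C.verts, C.adj, fun x => if x = v then c else C.lab x⟩
  | join (C : LCWConfig V k) (i j : Fin k) (hij : i ≠ j) :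
      LCWStep C ⟨C.verts, fun x y => C.adj x y ∨
        (x ∈ C.verts ∧ y ∈ C.verts ∧
          ((C.lab x = i ∧ C.lab y = j) ∨ (C.lab x = j ∧ C.lab y = i))), C.lab⟩
  | relabel (C : LCWConfig V k) (i j : Fin k) (hij : i ≠ j) :
      LCWStep C ⟨C.verts, C.adj, fun x => if C.lab x = i then j else C.lab x⟩

/-- `lcwLE G k` means that the graph `G` can be constructed by a linear clique-width
expression using (at most) `k` labels. -/
def lcwLE {V : Type} (G : SimpleGraph V) (k : ℕ) : Prop :=
  ∃ ℓ₀ ℓ : V → Fin k,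
    Relation.ReflTransGen LCWStep
      (⟨∅, fun _ _ => False, ℓ₀⟩ : LCWConfig V k) ⟨Set.univ, G.Adj, ℓ⟩

/-- The linear clique-width of a graph `G`: the least number of labels needed to
construct `G` by a linear clique-width expression. -/
noncomputable def lcw {V : Type} (G : SimpleGraph V) : ℕ :=
  sInf {k | lcwLE G k}

/-! ### Modules, prime graphs, inflations -/

/-- A module of a graph: every vertex outside `M` is adjacent to all of `M` or to none of it. -/
def IsModule {V : Type} (G : SimpleGraph V) (M : Set V) : Prop :=
  ∀ u ∈ M, ∀ v ∈ M, ∀ w ∉ M, (G.Adj w u ↔ G.Adj w v)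

/-- A graph on at least two vertices is prime if all of its modules are trivial
(empty, singletons, or the whole vertex set). -/
def IsPrime {V : Type} (G : SimpleGraph V) : Prop :=
  2 ≤ Nat.card V ∧ ∀ M : Set V, IsModule G M → M.Subsingleton ∨ M = Set.univ

/-- `IsInflation G H φ` says that `G` is an inflation of `H`, where `φ` maps each vertex of
`G` to the vertex of `H` whose module (namely the induced subgraph of `G` on the fiber
`φ ⁻¹ {v}`) contains it: fibers are nonempty, and for vertices in distinct fibers,
adjacency in `G` is equivalent to adjacency of the fibers' images in `H`. -/
def IsInflation {V ι : Type} (G : SimpleGraph V) (H : SimpleGraph ι) (φ : V → ι) : Prop :=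
  Function.Surjective φ ∧
    ∀ x y : V, φ x ≠ φ y → (G.Adj x y ↔ H.Adj (φ x) (φ y))

/-! ### Join, quasi-threshold graphs, universal quasi-threshold graphs -/

/-- The join of two graphs: their disjoint union together with all edges between the parts. -/
def GJoin {α β : Type} (G : SimpleGraph α) (H : SimpleGraph β) : SimpleGraph (α ⊕ β) :=
  (Gᶜ ⊕g Hᶜ)ᶜ

/-- Quasi-threshold graphs: those constructible (up to isomorphism) from `K₁` by repeatedly
taking joins with `K₁` and disjoint unions with other quasi-threshold graphs. -/
inductive IsQT : ∀ {V : Type}, SimpleGraph V → Prop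
  | single : IsQT (⊥ : SimpleGraph (Fin 1))
  | joinK1 {V : Type} {G : SimpleGraph V} :
      IsQT G → IsQT (GJoin (⊥ : SimpleGraph (Fin 1)) G)
  | union {V W : Type} {G : SimpleGraph V} {H : SimpleGraph W} :
      IsQT G → IsQT H → IsQT (G ⊕g H)
  | iso {V W : Type} {G : SimpleGraph V} {H : SimpleGraph W} :
      IsQT G → Nonempty (G ≃g H) → IsQT H

/-- Vertex set of the universal quasi-threshold graph `Q_{n+1}`. -/
def QVert : ℕ → Type
  | 0 => Fin 1
  | n + 1 => ((Fin 1) ⊕ QVert n) ⊕ QVert n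

/-- The universal quasi-threshold graphs, indexed so that `QGraph (t - 1)` is `Q_t`:
`Q_1 = K_1` and `Q_{t} = (K_1 ∗ Q_{t-1}) ⊎ Q_{t-1}` for `t ≥ 2`. -/
def QGraph : (n : ℕ) → SimpleGraph (QVert n)
  | 0 => ⊥
  | n + 1 => (GJoin (⊥ : SimpleGraph (Fin 1)) (QGraph n)) ⊕g (QGraph n)

/-! ### Hereditary classes of graphs -/

/-- A hereditary class of finite graphs, represented by the set of its members on the
vertex sets `Fin n`: it is closed under isomorphism and induced subgraphs, which together
amount to closure under induced-subgraph embeddings. -/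
def Hereditary (C : ∀ n : ℕ, Set (SimpleGraph (Fin n))) : Prop :=
  ∀ {m n : ℕ} (H : SimpleGraph (Fin m)) (G : SimpleGraph (Fin n)),
    Nonempty (H ↪g G) → G ∈ C n → H ∈ C m

/-! ### Expressions over an arbitrary label type -/

/-- `Bld S A ℓ`: some linear clique-width expression with labels from `L` introduces exactly the
vertices in `S`, creates exactly the adjacencies `A`, and leaves each `v ∈ S` with label `ℓ v`.
The constructor `congr` makes the values of `ℓ` outside `S` irrelevant. -/
inductive Bld {V L : Type} : Set V → (V → V → Prop) → (V → L) → Prop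
  | nil (ℓ : V → L) : Bld ∅ (fun _ _ => False) ℓ
  | add {S A ℓ} (v : V) (c : L) : Bld S A ℓ → v ∉ S →
      Bld (insert v S) A (fun x => if x = v then c else ℓ x)
  | join {S A ℓ} (i j : L) : i ≠ j → Bld S A ℓ →
      Bld S (fun x y => A x y ∨ (x ∈ S ∧ y ∈ S ∧ ((ℓ x = i ∧ ℓ y = j) ∨ (ℓ x = j ∧ ℓ y = i)))) ℓ
  | relabel {S A ℓ} (i j : L) : i ≠ j → Bld S A ℓ →
      Bld S A (fun x => if ℓ x = i then j else ℓ x)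
  | congr {S S' A A' ℓ ℓ'} : Bld S A ℓ → S = S' → (∀ x y, A x y ↔ A' x y) →
      (∀ v ∈ S, ℓ v = ℓ' v) → Bld S' A' ℓ'

theorem Bld.of_steps {V : Type} {k : ℕ} {C D : LCWConfig V k}
    (h : Relation.ReflTransGen LCWStep C D) (hC : Bld C.verts C.adj C.lab) :
    Bld D.verts D.adj D.lab := by
  induction h with
  | refl => exact hC
  | tail _ hs ih =>
    cases hs with
    | intro v hv c => exact ih.add v c hv
    | join i j hij => exact ih.join i j hij
    | relabel i j hij =>
      -- the two sides differ only in the decidability instance of `if`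
      exact (ih.relabel i j hij).congr rfl (fun _ _ => Iff.rfl)
        (fun v _ => by split_ifs <;> simp_all)

theorem Bld.steps {V : Type} {k : ℕ} {S : Set V} {A : V → V → Prop} {ℓ : V → Fin k}
    (h : Bld S A ℓ) : ∃ ℓ₀ ℓ' : V → Fin k, (∀ v ∈ S, ℓ' v = ℓ v) ∧
      Relation.ReflTransGen LCWStep
        (⟨∅, fun _ _ => False, ℓ₀⟩ : LCWConfig V k) ⟨S, A, ℓ'⟩ := by
  induction h with
  | nil ℓ => exact ⟨ℓ, ℓ, fun _ _ => rfl, .refl⟩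
  | add v c _ hv ih =>
    obtain ⟨ℓ₀, ℓ', he, hs⟩ := ih
    refine ⟨ℓ₀, _, ?_, hs.tail (.intro _ v hv c)⟩
    intro w hw
    by_cases hwv : w = v
    · simp [hwv]
    · simpa [hwv] using he w (hw.resolve_left hwv)
  | @join S A ℓ i j hij _ ih =>
    obtain ⟨ℓ₀, ℓ', he, hs⟩ := ih
    refine ⟨ℓ₀, ℓ', he, ?_⟩
    have h2 := hs.tail (.join _ i j hij)
    convert h2 using 2
    funext x y
    apply propext
    constructor
    · rintro (h | ⟨hx, hy, h⟩)
      · exact Or.inl h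
      · exact Or.inr ⟨hx, hy, by simpa [he x hx, he y hy] using h⟩
    · rintro (h | ⟨hx, hy, h⟩)
      · exact Or.inl h
      · exact Or.inr ⟨hx, hy, by simpa [he x hx, he y hy] using h⟩
  | relabel i j hij _ ih =>
    obtain ⟨ℓ₀, ℓ', he, hs⟩ := ih
    refine ⟨ℓ₀, _, ?_, hs.tail (.relabel _ i j hij)⟩
    intro w hw
    simp [he w hw]
  | congr _ hS hA hl ih =>
    obtain ⟨ℓ₀, ℓ', he, hs⟩ := ih
    subst hS
    refine ⟨ℓ₀, ℓ', fun v hv => (he v hv).trans (hl v hv), ?_⟩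
    convert hs using 2
    funext x y
    exact propext (hA x y).symm

theorem Bld.map {V L L' : Type} (f : L → L') (hf : Function.Injective f)
    {S : Set V} {A : V → V → Prop} {ℓ : V → L} (h : Bld S A ℓ) :
    Bld S A (fun v => f (ℓ v)) := by
  induction h with
  | nil ℓ => exact .nil _
  | add v c _ hv ih =>
    exact (ih.add v (f c) hv).congr rfl (fun _ _ => Iff.rfl) (fun w _ => by by_cases hw : w = v <;> simp [hw])
  | join i j hij _ ih =>
    exact (ih.join (f i) (f j) (hf.ne hij)).congr rfl (by simp [hf.eq_iff]) (fun _ _ => rfl)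
  | relabel i j hij _ ih =>
    exact (ih.relabel (f i) (f j) (hf.ne hij)).congr rfl (fun _ _ => Iff.rfl)
      (fun w _ => by simp only [hf.eq_iff]; split_ifs <;> rfl)
  | congr _ hS hA hl ih => exact ih.congr hS hA (fun v hv => by rw [hl v hv])

theorem lcwLE_iff {V : Type} (G : SimpleGraph V) (k : ℕ) :
    lcwLE G k ↔ ∃ ℓ : V → Fin k, Bld Set.univ G.Adj ℓ := by
  constructor
  · rintro ⟨ℓ₀, ℓ, hs⟩
    exact ⟨ℓ, Bld.of_steps hs (.nil ℓ₀)⟩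
  · rintro ⟨ℓ, h⟩
    obtain ⟨ℓ₀, ℓ', _, hs⟩ := h.steps
    exact ⟨ℓ₀, ℓ', hs⟩

theorem lcwLE_of_bld {V L : Type} [Fintype L] {G : SimpleGraph V} {ℓ : V → L} {k : ℕ}
    (h : Bld Set.univ G.Adj ℓ) (hk : Fintype.card L ≤ k) : lcwLE G k := by
  obtain ⟨f⟩ := Function.Embedding.nonempty_of_card_le (α := L) (β := Fin k) (by simpa using hk)
  exact (lcwLE_iff G k).2 ⟨_, h.map f f.injective⟩

/-- A finite graph is built by giving every vertex its own label and joining label pairs. -/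
theorem exists_lcwLE {V : Type} [Finite V] (G : SimpleGraph V) : ∃ k, lcwLE G k := by
  have := Fintype.ofFinite V
  have h1 : ∀ S : Finset V, Bld (S : Set V) (fun _ _ => False) (id : V → V) := by
    intro S
    induction S using Finset.induction_on with
    | empty => exact (Bld.nil id).congr (by simp) (fun _ _ => Iff.rfl) (fun _ _ => rfl)
    | insert v S hv ih =>
      exact (ih.add v v (by simpa using hv)).congr (by simp) (fun _ _ => Iff.rfl)
        (fun w _ => by by_cases hw : w = v <;> simp [hw])
  have h2 : ∀ E : Finset (V × V), Bld Set.univ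
      (fun x y => G.Adj x y ∧ ((x, y) ∈ E ∨ (y, x) ∈ E)) (id : V → V) := by
    intro E
    induction E using Finset.induction_on with
    | empty => exact (h1 Finset.univ).congr (by simp) (by simp) (fun _ _ => rfl)
    | insert e E he ih =>
      by_cases ha : G.Adj e.1 e.2
      · refine (ih.join e.1 e.2 ha.ne).congr rfl (fun x y => ?_) (fun _ _ => rfl)
        obtain ⟨a, b⟩ := e
        simp only [Set.mem_univ, id, true_and, Finset.mem_insert, Prod.mk.injEq]
        have : ∀ c d, x = c ∧ y = d → (G.Adj x y ↔ G.Adj c d) := by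
          rintro c d ⟨rfl, rfl⟩; rfl
        have h3 := this a b
        have h4 := this b a
        have h5 := G.adj_comm a b
        simp only at ha
        tauto
      · refine ih.congr rfl (fun x y => ?_) (fun _ _ => rfl)
        obtain ⟨a, b⟩ := e
        simp only [Finset.mem_insert, Prod.mk.injEq]
        have : ∀ c d, x = c ∧ y = d → (G.Adj x y ↔ G.Adj c d) := by
          rintro c d ⟨rfl, rfl⟩; rfl
        have h3 := this a b
        have h4 := this b a
        have h5 := G.adj_comm a b
        simp only at ha
        tauto
  exact ⟨Fintype.card V,
    lcwLE_of_bld ((h2 Finset.univ).congr rfl (by simp) (fun _ _ => rfl)) le_rfl⟩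

theorem lcwLE_lcw {V : Type} [Finite V] (G : SimpleGraph V) : lcwLE G (lcw G) :=
  Nat.sInf_mem (s := {k | lcwLE G k}) (exists_lcwLE G)

theorem lcwLE.mono {V : Type} {G : SimpleGraph V} {k m : ℕ} (h : lcwLE G k) (hkm : k ≤ m) :
    lcwLE G m := by
  obtain ⟨ℓ, h⟩ := (lcwLE_iff G k).1 h
  exact lcwLE_of_bld h (by simpa using hkm)

/-! ### Operations on expressions -/

theorem Bld.comap {V W L : Type} (f : W → V) (hf : Function.Injective f)
    {S : Set V} {A : V → V → Prop} {ℓ : V → L} (h : Bld S A ℓ) :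
    Bld (f ⁻¹' S) (fun x y => A (f x) (f y)) (fun w => ℓ (f w)) := by
  induction h with
  | nil ℓ => exact .nil _
  | @add S A ℓ v c _ hv ih =>
    by_cases hr : ∃ w, f w = v
    · obtain ⟨w, rfl⟩ := hr
      refine (ih.add w c hv).congr ?_ (fun _ _ => Iff.rfl) (fun u _ => by simp [hf.eq_iff])
      ext u; simp [hf.eq_iff]
    · have hne : ∀ w, f w ≠ v := fun w hw => hr ⟨w, hw⟩
      refine ih.congr ?_ (fun _ _ => Iff.rfl) (fun u _ => by simp [hne])
      ext u; simp [hne]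
  | join i j hij _ ih => exact ih.join i j hij
  | relabel i j hij _ ih => exact ih.relabel i j hij
  | congr _ hS hA hl ih =>
    exact ih.congr (by rw [hS]) (fun _ _ => hA _ _) (fun v hv => hl _ hv)

theorem Bld.pushforward {V W L : Type} (f : W → V) (hf : Function.Injective f)
    {T : Set W} {B : W → W → Prop} {m : W → L} (h : Bld T B m) :
    ∀ m' : V → L, (∀ a ∈ T, m' (f a) = m a) → Bld (f '' T) (Relation.Map B f f) m' := by
  induction h with
  | nil ℓ =>
    intro m' _
    exact (Bld.nil m').congr (by simp) (by simp [Relation.Map]) (fun _ _ => rfl)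
  | @add T B m v c _ hv ih =>
    intro m' hm'
    have h1 := ih (Function.extend f m m') (fun a _ => hf.extend_apply m m' a)
    refine (h1.add (f v) c (by simpa [hf.eq_iff] using hv)).congr
      (Set.image_insert_eq).symm (fun _ _ => Iff.rfl) ?_
    intro u hu
    rw [← Set.image_insert_eq] at hu
    obtain ⟨a, ha, rfl⟩ := hu
    rw [hm' a ha, hf.extend_apply]
    simp [hf.eq_iff]
  | @join T B m i j hij _ ih =>
    intro m' hm'
    refine ((ih m' hm').join i j hij).congr rfl (fun x y => ?_) (fun _ _ => rfl)
    constructor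
    · rintro (⟨a, b, hab, rfl, rfl⟩ | ⟨⟨a, ha, rfl⟩, ⟨b, hb, rfl⟩, hl⟩)
      · exact ⟨a, b, Or.inl hab, rfl, rfl⟩
      · rw [hm' a ha, hm' b hb] at hl
        exact ⟨a, b, Or.inr ⟨ha, hb, hl⟩, rfl, rfl⟩
    · rintro ⟨a, b, hab | ⟨ha, hb, hl⟩, rfl, rfl⟩
      · exact Or.inl ⟨a, b, hab, rfl, rfl⟩
      · rw [← hm' a ha, ← hm' b hb] at hl
        exact Or.inr ⟨⟨a, ha, rfl⟩, ⟨b, hb, rfl⟩, hl⟩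
  | @relabel T B m i j hij _ ih =>
    intro m' hm'
    have h1 := ih (Function.extend f m m') (fun a _ => hf.extend_apply m m' a)
    refine (h1.relabel i j hij).congr rfl (fun _ _ => Iff.rfl) ?_
    rintro u ⟨a, ha, rfl⟩
    rw [hm' a ha, hf.extend_apply]
  | congr _ hS hA hl ih =>
    intro m' hm'
    subst hS
    refine (ih m' (fun a ha => (hm' a ha).trans (hl a ha).symm)).congr rfl ?_ (fun _ _ => rfl)
    intro x y
    simp only [Relation.Map, hA]

/-- An expression for an induced subgraph, read as an expression on the ambient vertex type. -/
theorem exists_bld_of_induce {V : Type} {G : SimpleGraph V} {X : Set V} {k : ℕ}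
    (h : lcwLE (G.induce X) k) (hX : X.Nonempty) :
    ∃ m : V → Fin k, Bld X (fun x y => x ∈ X ∧ y ∈ X ∧ G.Adj x y) m := by
  obtain ⟨ℓ, h⟩ := (lcwLE_iff _ _).1 h
  obtain ⟨x₀, hx₀⟩ := hX
  refine ⟨Function.extend Subtype.val ℓ (fun _ => ℓ ⟨x₀, hx₀⟩), ?_⟩
  refine (h.pushforward Subtype.val Subtype.val_injective _
    (fun a _ => Subtype.val_injective.extend_apply _ _ a)).congr (by simp) ?_ (fun _ _ => rfl)
  intro x y
  constructor
  · rintro ⟨a, b, hab, rfl, rfl⟩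
    exact ⟨a.2, b.2, hab⟩
  · rintro ⟨hx, hy, hxy⟩
    exact ⟨⟨x, hx⟩, ⟨y, hy⟩, hxy, rfl, rfl⟩

theorem lcw_induce_le {V : Type} [Finite V] (G : SimpleGraph V) (X : Set V) :
    lcw (G.induce X) ≤ lcw G := by
  obtain ⟨ℓ, h⟩ := (lcwLE_iff G _).1 (lcwLE_lcw G)
  exact Nat.sInf_le ((lcwLE_iff _ _).2 ⟨_, h.comap Subtype.val Subtype.val_injective⟩)

/-- Several labels can be merged, one after the other, into a single label `c`. -/
theorem Bld.merge {V L : Type} {S : Set V} {A : V → V → Prop} {ℓ : V → L} (h : Bld S A ℓ)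
    (c : L) (T : Finset L) (hc : c ∉ T) : Bld S A (fun v => if ℓ v ∈ T then c else ℓ v) := by
  induction T using Finset.induction_on with
  | empty => simpa using h
  | insert t T ht ih =>
    have hct : t ≠ c := fun e => hc (by simp [e])
    have hcT : c ∉ T := fun e => hc (by simp [e])
    refine ((ih hcT).relabel t c hct).congr rfl (fun _ _ => Iff.rfl) (fun v _ => ?_)
    simp only [Finset.mem_insert]
    by_cases h1 : ℓ v ∈ T <;> by_cases h2 : ℓ v = t <;> simp_all

/-- Two expressions on disjoint vertex sets, over disjoint label sets `L₁` and `L₂`, can be run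
one after the other, since no operation of the second touches a label of the first. -/
theorem Bld.append {V L₁ L₂ : Type} {S T : Set V} {A B : V → V → Prop} {ℓ : V → L₁}
    {m : V → L₂} (h : Bld S A (fun v => (Sum.inl (ℓ v) : L₁ ⊕ L₂))) (h₂ : Bld T B m)
    (hST : ∀ v ∈ T, v ∉ S) :
    Bld (S ∪ T) (fun x y => A x y ∨ B x y)
      (fun v => if v ∈ S then (Sum.inl (ℓ v) : L₁ ⊕ L₂) else Sum.inr (m v)) := by
  induction h₂ with
  | nil m => exact h.congr (by simp) (by simp) (fun v hv => by simp [hv])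
  | @add T B m v c _ hv ih =>
    have hvS : v ∉ S := hST v (by simp)
    refine ((ih (fun w hw => hST w (by simp [hw]))).add v (Sum.inr c) ?_).congr
      (by simp) (fun _ _ => Iff.rfl) ?_
    · simp [hv, hvS]
    · intro w _
      by_cases hw : w = v
      · subst hw; simp [hvS]
      · simp [hw]
  | @join T B m i j hij _ ih =>
    refine ((ih hST).join (Sum.inr i) (Sum.inr j) (by simpa using hij)).congr rfl ?_
      (fun _ _ => rfl)
    intro x y
    have hx := hST x
    have hy := hST y
    by_cases h1 : x ∈ S <;> by_cases h2 : y ∈ S <;> simp [h1, h2] <;> tauto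
  | @relabel T B m i j hij _ ih =>
    refine ((ih hST).relabel (Sum.inr i) (Sum.inr j) (by simpa using hij)).congr rfl
      (fun _ _ => Iff.rfl) ?_
    intro v _
    by_cases h1 : v ∈ S
    · simp [h1]
    · simp only [h1, if_false, Sum.inr.injEq]
      split_ifs <;> rfl
  | congr _ hS hA hl ih =>
    subst hS
    refine (ih hST).congr rfl (fun x y => by rw [hA]) ?_
    intro v hv
    by_cases h1 : v ∈ S
    · simp [h1]
    · simp [h1, hl v (hv.resolve_left h1)]

/-! ### Expressions for inflations -/

/-- With the module `G_x` already present under the reserved label `none`, an expression for `H`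
is followed step by step. Introducing `w ≠ x` becomes building `G_w` with the `q` auxiliary labels
and merging them into the label of `w`; introducing `x` becomes relabeling `none`. -/
theorem Bld.inflate {V ι : Type} {G : SimpleGraph V} {φ : V → ι} (x : ι) {p q : ℕ}
    (hφ : Function.Surjective φ)
    (hq : ∀ w, w ≠ x → lcwLE (G.induce {v | φ v = w}) q)
    (h₀ : Bld {v | φ v = x} (fun u v => φ u = x ∧ φ v = x ∧ G.Adj u v)
      (fun _ => (Sum.inl none : Option (Fin p) ⊕ Fin q)))
    {S : Set ι} {A : ι → ι → Prop} {ℓ : ι → Fin p} (h : Bld S A ℓ) :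
    Bld {v | φ v ∈ S ∨ φ v = x}
      (fun u v => (φ u ≠ φ v ∧ A (φ u) (φ v)) ∨
        (φ u = φ v ∧ (φ u ∈ S ∨ φ u = x) ∧ G.Adj u v))
      (fun v => (Sum.inl (if φ v ∈ S then some (ℓ (φ v)) else none) :
        Option (Fin p) ⊕ Fin q)) := by
  induction h with
  | nil ℓ =>
    refine h₀.congr (by simp) (fun u v => ?_) (by simp)
    simp only [and_false, Set.mem_empty_iff_false, false_or]
    constructor
    · rintro ⟨hu, hv, ha⟩; exact ⟨hu.trans hv.symm, hu, ha⟩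
    · rintro ⟨huv, hu, ha⟩; exact ⟨hu, huv ▸ hu, ha⟩
  | @add S A ℓ w c _ hw ih =>
    by_cases hwx : w = x
    · subst hwx
      refine (ih.relabel (Sum.inl none) (Sum.inl (some c)) (by simp)).congr ?_ ?_ ?_
      · ext v; simp only [Set.mem_ofPred_eq, Set.mem_insert_iff]; tauto
      · intro u v; simp only [Set.mem_insert_iff]; tauto
      · intro v hv
        by_cases h1 : φ v = w
        · simp [h1, hw]
        · have h2 : φ v ∈ S := hv.resolve_right h1
          simp [h1, h2]
    · obtain ⟨m, hm⟩ := exists_bld_of_induce (hq w hwx) (hφ w)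
      have hd : ∀ v ∈ {v | φ v = w}, v ∉ {v | φ v ∈ S ∨ φ v = x} := by
        rintro v rfl hv
        exact hv.elim hw hwx
      have h1 := (ih.append hm hd).merge (Sum.inl (some c))
        (Finset.univ.image Sum.inr) (by simp)
      refine h1.congr ?_ ?_ ?_
      · ext v
        simp only [Set.mem_union, Set.mem_ofPred_eq, Set.mem_insert_iff]; tauto
      · intro u v
        simp only [Set.mem_ofPred_eq, Set.mem_insert_iff]
        by_cases huv : φ u = φ v
        · by_cases hu : φ v = w <;> simp [huv, hu]
        · have : ¬ (φ u = w ∧ φ v = w ∧ G.Adj u v) := fun h => huv (h.1.trans h.2.1.symm)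
          simp [huv, this]
      · intro v hv
        by_cases h2 : φ v = w
        · simp [h2, hw, hwx]
        · have h3 : φ v ∈ S ∨ φ v = x := hv.resolve_right h2
          simp [h2, h3]
  | @join S A ℓ i j hij _ ih =>
    refine (ih.join (Sum.inl (some i)) (Sum.inl (some j)) (by simpa using hij)).congr rfl ?_
      (fun _ _ => rfl)
    intro u v
    by_cases hu : φ u ∈ S <;> by_cases hv : φ v ∈ S <;>
      simp only [Set.mem_ofPred_eq, hu, hv, if_true, if_false, Sum.inl.injEq, Option.some.injEq,
        true_or, true_and, false_and, and_false, or_false, false_or, reduceCtorEq]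
    by_cases huv : φ u = φ v
    · -- equally labeled vertices are untouched by the join of two distinct labels
      have : ¬ ((ℓ (φ u) = i ∧ ℓ (φ v) = j) ∨ (ℓ (φ u) = j ∧ ℓ (φ v) = i)) := by
        rw [huv]
        rintro (⟨a, b⟩ | ⟨a, b⟩)
        · exact hij (a.symm.trans b)
        · exact hij (b.symm.trans a)
      tauto
    · tauto
  | @relabel S A ℓ i j hij _ ih =>
    refine (ih.relabel (Sum.inl (some i)) (Sum.inl (some j)) (by simpa using hij)).congr rfl
      (fun _ _ => Iff.rfl) ?_
    intro v _
    by_cases hv : φ v ∈ S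
    · simp only [hv, if_true, Sum.inl.injEq, Option.some.injEq]
      split_ifs <;> rfl
    · simp [hv]
  | @congr S _ _ _ _ _ _ hS hA hl ih =>
    subst hS
    refine ih.congr rfl (fun u v => by rw [hA]) (fun v _ => ?_)
    by_cases h1 : φ v ∈ S
    · simp only [h1, if_true, hl _ h1]
    · simp only [h1, if_false]

/-- One module may use all `p + 1 + q` labels because it is built before anything else and then
collapsed to a single label; the others have only the `q` auxiliary labels at their disposal. -/
theorem lcwLE_inflation {V ι : Type} {G : SimpleGraph V} {H : SimpleGraph ι} {φ : V → ι}
    (h : IsInflation G H φ) (x : ι) {p q : ℕ} (hH : lcwLE H p)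
    (hx : lcwLE (G.induce {v | φ v = x}) (p + 1 + q))
    (hq : ∀ w, w ≠ x → lcwLE (G.induce {v | φ v = w}) q) : lcwLE G (p + 1 + q) := by
  have hcard : Fintype.card (Option (Fin p) ⊕ Fin q) = p + 1 + q := by simp
  obtain ⟨m, hm⟩ := exists_bld_of_induce hx (h.1 x)
  let e : Fin (p + 1 + q) ≃ (Option (Fin p) ⊕ Fin q) :=
    (Fintype.equivFinOfCardEq hcard).symm
  have h₀ := (hm.map e e.injective).merge (Sum.inl none)
    (Finset.univ.erase (Sum.inl none)) (by simp)
  have h₁ : Bld {v | φ v = x} (fun u v => φ u = x ∧ φ v = x ∧ G.Adj u v)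
      (fun _ => (Sum.inl none : Option (Fin p) ⊕ Fin q)) := by
    refine h₀.congr rfl (fun _ _ => Iff.rfl) (fun v _ => ?_)
    by_cases hv : e (m v) = Sum.inl none <;> simp [hv]
  obtain ⟨ℓ, hℓ⟩ := (lcwLE_iff H p).1 hH
  refine lcwLE_of_bld ((Bld.inflate x h.1 hq h₁ hℓ).congr (S' := Set.univ) (A' := G.Adj)
    (by simp) ?_ (fun _ _ => rfl)) hcard.le
  intro u v
  by_cases huv : φ u = φ v
  · simp [huv]
  · simp [huv, h.2 u v huv]

/-- If `G = H[G_v : v ∈ V(H)]` is an inflation of a graph `H` on at least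
two vertices, then either some module has the same linear clique-width as `G`, or two
distinct modules have linear clique-width at least `lcw(G) - lcw(H) - 1`. -/
theorem lcw_two_modules {V ι : Type} [Finite V]
    (G : SimpleGraph V) (H : SimpleGraph ι) (φ : V → ι) (h : IsInflation G H φ)
    (hι : 2 ≤ Nat.card ι) :
    (∃ x : ι, lcw (G.induce {v | φ v = x}) = lcw G) ∨
    (∃ x y : ι, x ≠ y ∧
      lcw G - lcw H - 1 ≤ lcw (G.induce {v | φ v = x}) ∧
      lcw G - lcw H - 1 ≤ lcw (G.induce {v | φ v = y})) := by
  have : Finite ι := Finite.of_surjective φ h.1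
  have : Nontrivial ι := Finite.one_lt_card_iff_nontrivial.1 hι
  by_contra hcon
  obtain ⟨hne, hno⟩ := not_or.1 hcon
  obtain ⟨x, hmax⟩ := Finite.exists_max (fun x : ι => lcw (G.induce {v | φ v = x}))
  have hlt : ∀ w, w ≠ x → lcw (G.induce {v | φ v = w}) < lcw G - lcw H - 1 := by
    intro w hw
    by_contra hge
    exact hno ⟨w, x, hw, not_lt.1 hge, (not_lt.1 hge).trans (hmax w)⟩
  obtain ⟨y, hy⟩ := exists_ne x
  have hylt := hlt y hy
  have hxlt : lcw (G.induce {v | φ v = x}) < lcw G :=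
    lt_of_le_of_ne (lcw_induce_le G _) (fun e => hne ⟨x, e⟩)
  -- the number of labels used below is `lcw H + 1 + (lcw G - lcw H - 2) = lcw G - 1`
  have key : lcwLE G (lcw H + 1 + (lcw G - lcw H - 2)) :=
    lcwLE_inflation h x (lcwLE_lcw H) ((lcwLE_lcw _).mono (by omega))
      (fun w hw => (lcwLE_lcw _).mono (by have := hlt w hw; omega))
  have : lcw G ≤ lcw H + 1 + (lcw G - lcw H - 2) := Nat.sInf_le key
  omega
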